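/- (LP soundness) Let α ≥ 0 and R' ≥ 0. If some defending strategy r with total resource R' has defending result at most α, then LP(α, R') is feasible. Specifically, taking y_u = 1 if p_u ≥ UB_u and y_u = 0 otherwise for each u ∈ B_α, and y_v = 1 if p_v ≥ LB_v and y_v = 0 otherwise for each v ∈ V∖A_α, the pair (y, r) satisfies all constraints of LP(α, R'). -/

import Mathlib

open scoped Classical

/-- A network defending instance: a finite simple undirected graph together with
nonnegative symmetric edge weights `w`, thresholds `LB ≤ UB`, and values `g' ≤ g`. -/
structure DefInstance (V : Type*) where
  G : SimpleGraph V
  w : V → V → ℝ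
  w_nonneg : ∀ u v, 0 ≤ w u v
  w_symm : ∀ u v, w u v = w v u
  LB : V → ℝ
  UB : V → ℝ
  g : V → ℝ
  g' : V → ℝ
  LB_nonneg : ∀ u, 0 ≤ LB u
  LB_le_UB : ∀ u, LB u ≤ UB u
  g'_nonneg : ∀ u, 0 ≤ g' u
  g'_le_g : ∀ u, g' u ≤ g u

variable {V : Type*} [Fintype V]

/-- The defending power of node `u` under resource allocation `r`:
`p_u = r_u + ∑_{v : (u,v) ∈ E} w_{uv} · r_v`. -/
noncomputable def power (I : DefInstance V) (r : V → ℝ) (u : V) : ℝ :=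
  r u + ∑ v ∈ Finset.univ.filter (fun v => I.G.Adj u v), I.w u v * r v

/-- The attacker's gain when attacking node `u`: it is `g_u` if `p_u < LB_u`;
it is `g'_u` if `LB_u ≤ p_u < UB_u` and some neighbor `v` has `p_v < LB_v`;
and `0` otherwise. -/
noncomputable def gain (I : DefInstance V) (r : V → ℝ) (u : V) : ℝ :=
  if power I r u < I.LB u then I.g u
  else if power I r u < I.UB u ∧ ∃ v, I.G.Adj u v ∧ power I r v < I.LB v then I.g' u
  else 0

/-- The defending result of `r`: the maximum attacker's gain over all nodes. -/
noncomputable def defResult (I : DefInstance V) (r : V → ℝ) : ℝ :=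
  ⨆ u, gain I r u

/-- `r` is a defending strategy with total resource `R`. -/
def IsStrategy (r : V → ℝ) (R : ℝ) : Prop :=
  (∀ u, 0 ≤ r u) ∧ ∑ u, r u = R

/-- The value `α` is achievable with resource `R`: some defending strategy with total
resource `R` has defending result at most `α`. -/
def Achievable (I : DefInstance V) (α R : ℝ) : Prop :=
  ∃ r, IsStrategy r R ∧ defResult I r ≤ α

/-- The LP relaxation `LP(α, R')`: reals `y_u` (for `u ∈ B_α ∪ (V∖A_α)`, i.e. `g'_u > α`
or `¬ g_u > α`) and `r_u ≥ 0` for `u ∈ V` with: `y_u + y_v ≥ 1` for every edge `(u,v)`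
with `u ∈ B_α`, `v ∈ V∖A_α`; `p_u ≥ LB_u + y_u·(UB_u − LB_u)` for `u ∈ B_α`;
`p_u ≥ LB_u` for `u ∈ A_α∖B_α`; `p_v ≥ y_v·LB_v` for `v ∈ V∖A_α`; and `∑_u r_u = R'`. -/
def LPFeasible {V : Type*} [Fintype V] (I : DefInstance V) (α R' : ℝ)
    (y r : V → ℝ) : Prop :=
  (∀ u, (I.g' u > α ∨ ¬ I.g u > α) → 0 ≤ y u) ∧
  (∀ u, 0 ≤ r u) ∧
  (∀ u v, I.G.Adj u v → I.g' u > α → ¬ I.g v > α → 1 ≤ y u + y v) ∧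
  (∀ u, I.g' u > α → I.LB u + y u * (I.UB u - I.LB u) ≤ power I r u) ∧
  (∀ u, I.g u > α → ¬ I.g' u > α → I.LB u ≤ power I r u) ∧
  (∀ v, ¬ I.g v > α → y v * I.LB v ≤ power I r v) ∧
  ∑ u, r u = R'

/-!
A gain of at most `α` at `u` excludes every case in which the attacker would collect more: at a
vulnerable node it forces `LB u ≤ p u`, and at a crucial node it also forces `UB u ≤ p u` unless all
neighbors `v` have `LB v ≤ p v`. The latter dichotomy is the covering constraint of the LP for the
threshold indicators, and the power constraints say that `p u` is at least whichever of two
thresholds the indicator selects, the lower one being `0` at the nodes that are not vulnerable.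
-/

section Indicators

variable {K : Type*}

theorem one_le_ite_add_ite [AddMonoidWithOne K] [Preorder K] [ZeroLEOneClass K] [AddLeftMono K]
    [AddRightMono K] {P Q : Prop} [Decidable P] [Decidable Q] (h : P ∨ Q) :
    (1 : K) ≤ (if P then 1 else 0) + (if Q then 1 else 0) := by
  rcases h with hP | hQ
  · rw [if_pos hP]
    exact le_add_of_nonneg_right (ite_nonneg zero_le_one le_rfl)
  · rw [if_pos hQ]
    exact le_add_of_nonneg_left (ite_nonneg zero_le_one le_rfl)

theorem add_ite_mul_sub_le [NonAssocRing K] [LE K] {a b p : K} [Decidable (b ≤ p)] (ha : a ≤ p) :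
    a + (if b ≤ p then 1 else 0) * (b - a) ≤ p := by
  split_ifs with hb
  · rwa [one_mul, add_sub_cancel]
  · rwa [zero_mul, add_zero]

end Indicators

/-- The values `y` of the LP read off from a strategy `r`: at a crucial node the indicator of
reaching the upper threshold, at any other node the indicator of reaching the lower one. The values
at nodes that are vulnerable but not crucial do not enter the LP. -/
noncomputable def thresholdCover (I : DefInstance V) (α : ℝ) (r : V → ℝ) (u : V) : ℝ :=
  if I.g' u > α then (if I.UB u ≤ power I r u then 1 else 0)
  else (if I.LB u ≤ power I r u then 1 else 0)

variable {I : DefInstance V} {α : ℝ} {r : V → ℝ} {u v : V}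

theorem power_nonneg (hr : ∀ u, 0 ≤ r u) (u : V) : 0 ≤ power I r u :=
  add_nonneg (hr u) (Finset.sum_nonneg fun v _ => mul_nonneg (I.w_nonneg u v) (hr v))

theorem gain_le_defResult (I : DefInstance V) (r : V → ℝ) (u : V) : gain I r u ≤ defResult I r :=
  le_ciSup (Set.finite_range (gain I r)).bddAbove u

theorem gain_of_power_lt_LB (hu : power I r u < I.LB u) : gain I r u = I.g u :=
  if_pos hu

theorem gain_of_adj_of_power_lt_LB (hLB : I.LB u ≤ power I r u) (hUB : power I r u < I.UB u)
    (huv : I.G.Adj u v) (hv : power I r v < I.LB v) : gain I r u = I.g' u := by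
  rw [gain, if_neg hLB.not_gt, if_pos ⟨hUB, v, huv, hv⟩]

theorem LB_le_power_of_gain_lt_g (h : gain I r u < I.g u) : I.LB u ≤ power I r u := by
  contrapose! h
  exact (gain_of_power_lt_LB h).ge

theorem LB_le_power_of_gain_lt_g' (h : gain I r u < I.g' u) : I.LB u ≤ power I r u :=
  LB_le_power_of_gain_lt_g (h.trans_le (I.g'_le_g u))

theorem UB_le_power_or_LB_le_power_of_adj (h : gain I r u < I.g' u) (huv : I.G.Adj u v) :
    I.UB u ≤ power I r u ∨ I.LB v ≤ power I r v := by
  by_contra! hlt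
  exact h.ne (gain_of_adj_of_power_lt_LB (LB_le_power_of_gain_lt_g' h) hlt.1 huv hlt.2)

theorem thresholdCover_of_lt_g' (hu : α < I.g' u) :
    thresholdCover I α r u = if I.UB u ≤ power I r u then 1 else 0 :=
  if_pos hu

theorem thresholdCover_of_g_le (hu : I.g u ≤ α) :
    thresholdCover I α r u = if I.LB u ≤ power I r u then 1 else 0 :=
  if_neg ((I.g'_le_g u).trans hu).not_gt

theorem thresholdCover_nonneg : 0 ≤ thresholdCover I α r u := by
  unfold thresholdCover
  split <;> exact ite_nonneg zero_le_one le_rfl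

theorem one_le_thresholdCover_add_thresholdCover (h : gain I r u ≤ α) (huv : I.G.Adj u v)
    (hu : α < I.g' u) (hv : I.g v ≤ α) :
    1 ≤ thresholdCover I α r u + thresholdCover I α r v := by
  rw [thresholdCover_of_lt_g' hu, thresholdCover_of_g_le hv]
  exact one_le_ite_add_ite (UB_le_power_or_LB_le_power_of_adj (h.trans_lt hu) huv)

theorem LB_add_thresholdCover_mul_le_power (h : gain I r u ≤ α) (hu : α < I.g' u) :
    I.LB u + thresholdCover I α r u * (I.UB u - I.LB u) ≤ power I r u := by
  rw [thresholdCover_of_lt_g' hu]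
  exact add_ite_mul_sub_le (LB_le_power_of_gain_lt_g' (h.trans_lt hu))

theorem thresholdCover_mul_LB_le_power (hr : ∀ u, 0 ≤ r u) (hv : I.g v ≤ α) :
    thresholdCover I α r v * I.LB v ≤ power I r v := by
  rw [thresholdCover_of_g_le hv]
  simpa only [sub_zero, zero_add] using add_ite_mul_sub_le (b := I.LB v) (power_nonneg hr v)

/-- LP soundness: if a defending strategy `r` with total resource `R'` has
defending result at most `α`, then `LP(α, R')` is feasible; specifically, setting `y_u = 1`
iff `p_u ≥ UB_u` for `u ∈ B_α` and `y_v = 1` iff `p_v ≥ LB_v` for `v ∈ V∖A_α` (and `0`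
otherwise), the pair `(y, r)` satisfies all constraints of `LP(α, R')`. -/
theorem LP_sound {V : Type*} [Fintype V] [Nonempty V] (I : DefInstance V)
    (α R' : ℝ) (hα : 0 ≤ α) (hR' : 0 ≤ R')
    (r : V → ℝ) (hr : IsStrategy r R') (hres : defResult I r ≤ α) :
    LPFeasible I α R'
      (fun u => if I.g' u > α then (if I.UB u ≤ power I r u then 1 else 0)
                else (if I.LB u ≤ power I r u then 1 else 0)) r ∧
    ∃ y r₀ : V → ℝ, LPFeasible I α R' y r₀ := by
  obtain ⟨hr_nonneg, hr_sum⟩ := hr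
  have hgain (u : V) : gain I r u ≤ α := (gain_le_defResult I r u).trans hres
  have hfeasible : LPFeasible I α R' (thresholdCover I α r) r :=
    ⟨fun _ _ => thresholdCover_nonneg,
      hr_nonneg,
      fun u _ huv hu hv =>
        one_le_thresholdCover_add_thresholdCover (hgain u) huv hu (not_lt.mp hv),
      fun u hu => LB_add_thresholdCover_mul_le_power (hgain u) hu,
      fun u hu _ => LB_le_power_of_gain_lt_g ((hgain u).trans_lt hu),
      fun _ hv => thresholdCover_mul_LB_le_power hr_nonneg (not_lt.mp hv),
      hr_sum⟩
  exact ⟨hfeasible, _, _, hfeasible⟩
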